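/- For every t > 0 and every v₀ > 0, one has ∫_{(0,v₀]} v² μ^{ℓ,r}_t(dv) ≤ (2·E[R^γ]/(γ(γ−1)(2−γ)))·t·v₀^{2−γ}. -/

import Mathlib

open MeasureTheory Filter Set
open scoped ENNReal NNReal Topology

noncomputable section

/-- `ℓ_t(s,u)`: the length of the interval `[s,s+u] ∩ [0,t]`. -/
def ellK (t s u : ℝ) : ℝ := max 0 (min (s + u) t - max s 0)

/-- The intensity measure `u^{-γ-1} du` on `(0,∞)`. -/
def muU (γ : ℝ) : Measure ℝ :=
  (volume.restrict (Set.Ioi 0)).withDensity fun u => ENNReal.ofReal (u ^ (-γ - 1))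

/-- The measure `μ^ℓ_t` on `(0,∞)`:
`μ^ℓ_t(A) = ∫_ℝ ∫_0^∞ 1{ℓ_t(s,u) ∈ A} u^{-γ-1} du ds`. -/
def muEll (γ t : ℝ) : Measure ℝ :=
  (Measure.map (fun p : ℝ × ℝ => ellK t p.1 p.2)
    ((volume : Measure ℝ).prod (muU γ))).restrict (Set.Ioi 0)

/-- The measure `μ^{ℓ,r}_t` on `(0,∞)`:
`μ^{ℓ,r}_t(A) = ∫_{(0,∞)} ∫_{(0,∞)} 1{rℓ ∈ A} μ^ℓ_t(dℓ) F_R(dr)`. -/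
def muEllR (γ t : ℝ) (FR : Measure ℝ) : Measure ℝ :=
  (Measure.map (fun p : ℝ × ℝ => p.1 * p.2) (FR.prod (muEll γ t))).restrict (Set.Ioi 0)

/-- The measure `ν` on `[0,1]`: density `s^{-(γ+1)} + ((2-γ)/γ)·s^{-γ}` on `(0,1)` with
respect to Lebesgue measure, together with an atom of mass `1/(γ(γ-1))` at the point `1`. -/
def nuM (γ : ℝ) : Measure ℝ :=
  (volume.restrict (Set.Ioo 0 1)).withDensity
      (fun s => ENNReal.ofReal (s ^ (-(γ + 1)) + (2 - γ) / γ * s ^ (-γ)))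
    + (Real.toNNReal (1 / (γ * (γ - 1)))) • Measure.dirac 1

instance nuM.sigmaFinite (γ : ℝ) : SigmaFinite (nuM γ) := by
  unfold nuM; infer_instance

end

lemma lint_ellK (t u : ℝ) (ht : 0 < t) (hu : 0 < u) :
    ∫⁻ s, ENNReal.ofReal (ellK t s u) = ENNReal.ofReal (u * t) := by
  have h1 : ∀ s, ENNReal.ofReal (ellK t s u)
      = ∫⁻ y, (Icc (0:ℝ) u ×ˢ Icc 0 t).indicator 1 (y - s, y) := by
    intro s
    have : (fun y => (Icc (0:ℝ) u ×ˢ Icc 0 t).indicator (1 : ℝ × ℝ → ℝ≥0∞) (y - s, y))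
        = (Icc (max s 0) (min (s + u) t)).indicator 1 := by
      funext y
      simp only [indicator_apply, mem_prod, mem_Icc, max_le_iff, le_min_iff, Pi.one_apply]
      congr 1
      apply propext
      constructor
      · rintro ⟨⟨_, _⟩, _, _⟩
        refine ⟨⟨?_, ?_⟩, ?_, ?_⟩ <;> linarith
      · rintro ⟨⟨_, _⟩, _, _⟩
        refine ⟨⟨?_, ?_⟩, ?_, ?_⟩ <;> linarith
    rw [this, lintegral_indicator_one measurableSet_Icc, Real.volume_Icc, ellK]
    rw [ENNReal.ofReal_max]; simp
  have hm : Measurable ((Icc (0:ℝ) u ×ˢ Icc (0:ℝ) t).indicator (1 : ℝ × ℝ → ℝ≥0∞)) :=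
    measurable_one.indicator (measurableSet_Icc.prod measurableSet_Icc)
  simp_rw [h1]
  rw [lintegral_lintegral_swap]
  · have h2 : ∀ y : ℝ, ∫⁻ s, (Icc (0:ℝ) u ×ˢ Icc 0 t).indicator (1 : ℝ × ℝ → ℝ≥0∞) (y - s, y)
        = (Icc (0:ℝ) t).indicator (fun _ => ENNReal.ofReal u) y := by
      intro y
      rw [lintegral_sub_left_eq_self
        (fun z => (Icc (0:ℝ) u ×ˢ Icc 0 t).indicator (1 : ℝ × ℝ → ℝ≥0∞) (z, y)) y]
      by_cases hy : y ∈ Icc (0:ℝ) t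
      · have : (fun z => (Icc (0:ℝ) u ×ˢ Icc 0 t).indicator (1 : ℝ × ℝ → ℝ≥0∞) (z, y))
            = (Icc (0:ℝ) u).indicator 1 := by
          funext z
          simp only [indicator_apply, mem_prod, hy, and_true, Pi.one_apply]
        rw [this, lintegral_indicator_one measurableSet_Icc, Real.volume_Icc, indicator_of_mem hy]
        simp
      · have : (fun z => (Icc (0:ℝ) u ×ˢ Icc 0 t).indicator (1 : ℝ × ℝ → ℝ≥0∞) (z, y))
            = fun _ => 0 := by
          funext z
          simp only [indicator_apply, mem_prod, hy, and_false, if_false]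
        rw [this, indicator_of_notMem hy]
        simp
    simp_rw [h2]
    rw [lintegral_indicator_const measurableSet_Icc, Real.volume_Icc, sub_zero,
      ← ENNReal.ofReal_mul hu.le]
  · exact (hm.comp (by fun_prop : Measurable fun p : ℝ × ℝ => (p.2 - p.1, p.2))).aemeasurable

instance muU_sf (γ : ℝ) : SFinite (muU γ) := by unfold muU; infer_instance

instance muEll_sf (γ t : ℝ) : SFinite (muEll γ t) := by unfold muEll; infer_instance

lemma meas_ellK (t : ℝ) : Measurable (fun p : ℝ × ℝ => ellK t p.1 p.2) := by
  unfold ellK; fun_prop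

lemma lint_u (γ : ℝ) (hγ1 : 1 < γ) (hγ2 : γ < 2) (x : ℝ) (hx : 0 < x) :
    ∫⁻ u, ENNReal.ofReal (min u x * u) ∂(muU γ)
      ≤ ENNReal.ofReal (x ^ (2 - γ) / ((γ - 1) * (2 - γ))) := by
  have hA : ∫⁻ u in Ioc 0 x, ENNReal.ofReal (u ^ (1 - γ))
      = ENNReal.ofReal (x ^ (2 - γ) / (2 - γ)) := by
    have hi : IntervalIntegrable (fun u : ℝ => u ^ (1 - γ)) volume 0 x :=
      intervalIntegral.intervalIntegrable_rpow' (by linarith)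
    rw [← ofReal_integral_eq_lintegral_ofReal]
    · rw [← intervalIntegral.integral_of_le hx.le, integral_rpow (Or.inl (by linarith)),
        show 1 - γ + 1 = 2 - γ by ring, Real.zero_rpow (by linarith), sub_zero]
    · exact (intervalIntegrable_iff_integrableOn_Ioc_of_le hx.le).1 hi
    · filter_upwards [ae_restrict_mem measurableSet_Ioc] with u hu
      exact Real.rpow_nonneg hu.1.le _
  have hB : ∫⁻ u in Ioi x, ENNReal.ofReal (x * u ^ (-γ))
      = ENNReal.ofReal (x ^ (2 - γ) / (γ - 1)) := by
    rw [← ofReal_integral_eq_lintegral_ofReal]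
    · rw [integral_const_mul, integral_Ioi_rpow_of_lt (by linarith) hx]
      congr 1
      have e : x ^ (2 - γ) = x * x ^ (-γ + 1) := by
        rw [show 2 - γ = 1 + (-γ + 1) by ring, Real.rpow_add hx, Real.rpow_one]
      have h0 : γ - 1 ≠ 0 := by linarith
      have h1 : -γ + 1 ≠ 0 := by linarith
      rw [e, show -γ + 1 = -(γ - 1) by ring]
      field_simp
    · exact (integrableOn_Ioi_rpow_of_lt (by linarith) hx).const_mul x
    · filter_upwards [ae_restrict_mem measurableSet_Ioi] with u hu
      have hu' : x < u := hu
      have := Real.rpow_nonneg (hx.trans hu').le (-γ)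
      exact mul_nonneg hx.le this
  unfold muU
  rw [lintegral_withDensity_eq_lintegral_mul _ (by fun_prop) (by fun_prop),
    ← Ioc_union_Ioi_eq_Ioi hx.le,
    lintegral_union measurableSet_Ioi (Ioc_disjoint_Ioi le_rfl)]
  have h2 : 0 < 2 - γ := by linarith
  have h1 : 0 < γ - 1 := by linarith
  have hxp := Real.rpow_pos_of_pos hx (2 - γ)
  calc _ ≤ (∫⁻ u in Ioc 0 x, ENNReal.ofReal (u ^ (1 - γ)))
        + ∫⁻ u in Ioi x, ENNReal.ofReal (x * u ^ (-γ)) := by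
        gcongr ?_ + ?_
        · refine setLIntegral_mono' measurableSet_Ioc fun u hu => ?_
          have hu0 : 0 < u := hu.1
          simp only [Pi.mul_apply]
          rw [← ENNReal.ofReal_mul (Real.rpow_nonneg hu0.le _), min_eq_left hu.2,
            show 1 - γ = (-γ - 1) + (1 + 1) by ring, Real.rpow_add hu0, Real.rpow_add hu0,
            Real.rpow_one]
        · refine setLIntegral_mono' measurableSet_Ioi fun u hu => ?_
          have hu' : x < u := hu
          have hu0 : 0 < u := hx.trans hu'
          simp only [Pi.mul_apply]
          rw [← ENNReal.ofReal_mul (Real.rpow_nonneg hu0.le _), min_eq_right hu'.le,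
            show -γ = (-γ - 1) + 1 by ring, Real.rpow_add hu0, Real.rpow_one]
          apply le_of_eq
          congr 1
          ring_nf
    _ ≤ _ := by
        rw [hA, hB, ← ENNReal.ofReal_add (by positivity) (by positivity)]
        apply le_of_eq
        congr 1
        field_simp
        ring

lemma lint_muEll (γ : ℝ) (hγ1 : 1 < γ) (hγ2 : γ < 2) (t : ℝ) (ht : 0 < t) (x : ℝ) (hx : 0 < x) :
    ∫⁻ l, (Ioc 0 x).indicator (fun l => ENNReal.ofReal (l ^ 2)) l ∂(muEll γ t)
      ≤ ENNReal.ofReal (t * (x ^ (2 - γ) / ((γ - 1) * (2 - γ)))) := by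
  have hg : Measurable ((Ioc 0 x).indicator (fun l : ℝ => ENNReal.ofReal (l ^ 2))) :=
    Measurable.indicator (by fun_prop) measurableSet_Ioc
  unfold muEll
  refine (lintegral_mono' Measure.restrict_le_self le_rfl).trans ?_
  rw [lintegral_map hg (meas_ellK t),
    lintegral_prod_symm (fun a : ℝ × ℝ => (Ioc 0 x).indicator (fun l : ℝ => ENNReal.ofReal (l ^ 2))
      (ellK t a.1 a.2)) (hg.comp (meas_ellK t)).aemeasurable]
  calc _ ≤ ∫⁻ u, ENNReal.ofReal t * ENNReal.ofReal (min u x * u) ∂(muU γ) := by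
        have hpos : ∀ᵐ u ∂(muU γ), 0 < u := by
          unfold muU
          exact (withDensity_absolutelyContinuous _ _).ae_le (ae_restrict_mem measurableSet_Ioi)
        refine lintegral_mono_ae ?_
        filter_upwards [hpos] with u hu
        have hm : 0 < min u x := lt_min hu hx
        calc _ ≤ ∫⁻ s, ENNReal.ofReal (min u x) * ENNReal.ofReal (ellK t s u) := by
              refine lintegral_mono fun s => ?_
              simp only [indicator_apply]
              split_ifs with h
              · rw [← ENNReal.ofReal_mul hm.le]
                apply ENNReal.ofReal_le_ofReal
                rw [sq]
                refine mul_le_mul_of_nonneg_right (le_min ?_ h.2) h.1.le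
                unfold ellK
                refine max_le hu.le ?_
                have := min_le_left (s + u) t
                have := le_max_left s 0
                linarith
              · exact zero_le
          _ = _ := by
              have : Measurable fun s => ellK t s u := by unfold ellK; fun_prop
              rw [lintegral_const_mul _ (by fun_prop), lint_ellK t u ht hu,
                ← ENNReal.ofReal_mul hm.le, ← ENNReal.ofReal_mul ht.le]
              congr 1
              ring
    _ ≤ _ := by
        rw [lintegral_const_mul _ (by fun_prop), ENNReal.ofReal_mul ht.le]
        gcongr
        exact lint_u γ hγ1 hγ2 x hx

/-- For every `t > 0`, `v₀ > 0`:
`∫_{(0,v₀]} v² μ^{ℓ,r}_t(dv) ≤ (2 E[R^γ]/(γ(γ-1)(2-γ)))·t·v₀^{2-γ}`. -/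
theorem stmt_12 (γ : ℝ) (hγ1 : 1 < γ) (hγ2 : γ < 2)
    (FR : Measure ℝ) [IsProbabilityMeasure FR] (hFRpos : FR (Set.Iic 0) = 0)
    (hmom : Integrable (fun r => r ^ γ) FR)
    (t : ℝ) (ht : 0 < t) (v0 : ℝ) (hv0 : 0 < v0) :
    ∫⁻ v in Set.Ioc 0 v0, ENNReal.ofReal (v ^ 2) ∂(muEllR γ t FR)
      ≤ ENNReal.ofReal (2 * (∫ r, r ^ γ ∂FR) / (γ * (γ - 1) * (2 - γ)) * t * v0 ^ (2 - γ)) := by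
  have hg : Measurable ((Ioc 0 v0).indicator (fun l : ℝ => ENNReal.ofReal (l ^ 2))) :=
    Measurable.indicator (by fun_prop) measurableSet_Ioc
  have hmul : Measurable (fun p : ℝ × ℝ => p.1 * p.2) := by fun_prop
  have h2 : 0 < 2 - γ := by linarith
  have h1 : 0 < γ - 1 := by linarith
  have hpos : ∀ᵐ r ∂FR, 0 < r := by
    rw [ae_iff]
    convert hFRpos using 2
    ext r
    simp
  rw [← lintegral_indicator measurableSet_Ioc]
  unfold muEllR
  refine (lintegral_mono' Measure.restrict_le_self le_rfl).trans ?_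
  rw [lintegral_map hg hmul, lintegral_prod (fun a : ℝ × ℝ => (Ioc 0 v0).indicator (fun l : ℝ => ENNReal.ofReal (l ^ 2)) (a.1 * a.2)) (hg.comp hmul).aemeasurable]
  set K := t * (v0 ^ (2 - γ) / ((γ - 1) * (2 - γ))) with hK
  have hK0 : 0 ≤ K := by positivity
  calc _ ≤ ∫⁻ r, ENNReal.ofReal (K * r ^ γ) ∂FR := by
        refine lintegral_mono_ae ?_
        filter_upwards [hpos] with r hr
        have e : ∀ l : ℝ, (Ioc 0 v0).indicator (fun l : ℝ => ENNReal.ofReal (l ^ 2)) (r * l)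
            = ENNReal.ofReal (r ^ 2) *
              (Ioc 0 (v0 / r)).indicator (fun l : ℝ => ENNReal.ofReal (l ^ 2)) l := by
          intro l
          have : r * l ∈ Ioc 0 v0 ↔ l ∈ Ioc 0 (v0 / r) := by
            simp only [mem_Ioc, le_div_iff₀ hr, mul_pos_iff_of_pos_left hr, mul_comm l r]
          simp only [indicator_apply, this]
          split_ifs
          · rw [mul_pow, ENNReal.ofReal_mul (by positivity)]
          · simp
        simp_rw [e]
        rw [lintegral_const_mul _ (Measurable.indicator (by fun_prop) measurableSet_Ioc)]
        refine (mul_le_mul_right (lint_muEll γ hγ1 hγ2 t ht (v0 / r) (by positivity)) _).trans ?_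
        rw [← ENNReal.ofReal_mul (by positivity)]
        apply le_of_eq
        congr 1
        have e2 : r ^ (2:ℕ) = r ^ γ * r ^ (2 - γ) := by
          rw [← Real.rpow_add hr, ← Real.rpow_natCast]; congr 1; push_cast; ring
        have := Real.rpow_pos_of_pos hr (2 - γ)
        rw [Real.div_rpow hv0.le hr.le, e2, hK]
        field_simp
    _ = ENNReal.ofReal (K * ∫ r, r ^ γ ∂FR) := by
        rw [← integral_const_mul, ofReal_integral_eq_lintegral_ofReal (hmom.const_mul K)]
        filter_upwards [hpos] with r hr
        have := Real.rpow_nonneg hr.le γ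
        exact mul_nonneg hK0 this
    _ ≤ _ := by
        apply ENNReal.ofReal_le_ofReal
        have hI : 0 ≤ ∫ r, r ^ γ ∂FR := by
          apply integral_nonneg_of_ae
          filter_upwards [hpos] with r hr
          exact Real.rpow_nonneg hr.le γ
        have hv := Real.rpow_pos_of_pos hv0 (2 - γ)
        have hg0 : 0 < γ := by linarith
        have e3 : 2 * (∫ r, r ^ γ ∂FR) / (γ * (γ - 1) * (2 - γ)) * t * v0 ^ (2 - γ)
            = (2 / γ) * (K * ∫ r, r ^ γ ∂FR) := by
          rw [hK]; field_simp
        rw [e3]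
        refine le_mul_of_one_le_left (mul_nonneg hK0 hI) ?_
        rw [le_div_iff₀ hg0]; linarith
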